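/- arXiv:2107.06674 — 4 statements merged into one kernel-verified Lean document; each statement's English description precedes it below -/
import Mathlib

section
/- Let G be a finite abelian group, written additively, and let R > 0 be a real number. Let μ : G → ℝ be a probability measure on G, i.e., μ(x) ≥ 0 for all x and ∑_{x ∈ G} μ(x) = 1. For an additive character χ of G (a map χ : G → ℂ with χ(0) = 1 and χ(x+y) = χ(x)·χ(y) for all x, y) write μ̂(χ) = ∑_{x ∈ G} μ(x)·χ(x). Assume that for every additive character χ of G, either |μ̂(χ)| ≤ 1/R or μ̂(χ) = 1. Let S = {x ∈ G : μ(x) ≠ 0} be the support of μ and let A be a nonempty subset of G. Then 2·|A + S| > min(R²·|A|, |⟨S⟩|), where ⟨S⟩ is the subgroup generated by S and A + S = {a + s : a ∈ A, s ∈ S}. In particular, if S ⊆ A ⊆ ⟨S⟩ and 2·|A + A| ≤ R²·|A|, then A + A + A + A = ⟨S⟩. -/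
open scoped Pointwise
open Finset

set_option synthInstance.maxHeartbeats 400000
set_option maxHeartbeats 1000000

open scoped ComplexConjugate in
theorem parseval_aux (G : Type) [AddCommGroup G] [Fintype G] (g : G → ℂ) :
    ∑ χ : AddChar G ℂ, ‖∑ x, g x * χ x‖ ^ 2 = (Fintype.card G : ℝ) * ∑ x, ‖g x‖ ^ 2 := by
  classical
  have key : ∑ χ : AddChar G ℂ, (∑ x, g x * χ x) * conj (∑ x, g x * χ x)
      = (Fintype.card G : ℂ) * ∑ x, g x * conj (g x) := by
    calc _ = ∑ χ : AddChar G ℂ, ∑ x, ∑ y, g x * conj (g y) * χ (x - y) := by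
          refine sum_congr rfl fun χ _ => ?_
          rw [map_sum, sum_mul_sum]
          refine sum_congr rfl fun x _ => sum_congr rfl fun y _ => ?_
          rw [map_mul, ← AddChar.map_neg_eq_conj, sub_eq_add_neg, AddChar.map_add_eq_mul]
          ring
      _ = ∑ x, ∑ y, g x * conj (g y) * ∑ χ : AddChar G ℂ, χ (x - y) := by
          rw [sum_comm]
          refine sum_congr rfl fun x _ => ?_
          rw [sum_comm]
          refine sum_congr rfl fun y _ => ?_
          rw [mul_sum]
      _ = _ := by
          rw [mul_sum]
          refine sum_congr rfl fun x _ => ?_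
          simp only [AddChar.sum_apply_eq_ite, sub_eq_zero]
          simp [mul_comm]
  have h2 : ∀ z : ℂ, z * conj z = ((‖z‖ ^ 2 : ℝ) : ℂ) := by
    intro z; rw [Complex.mul_conj, Complex.normSq_eq_norm_sq]
  simp only [h2] at key
  exact_mod_cast key

/-- If the Fourier coefficient is one, the character is trivial on the support. -/
theorem trivial_aux (G : Type) [AddCommGroup G] [Fintype G]
    (μ : G → ℝ) (hμ0 : ∀ x, 0 ≤ μ x) (hμ1 : ∑ x : G, μ x = 1) (χ : AddChar G ℂ)
    (h : ∑ x : G, (μ x : ℂ) * χ x = 1) :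
    ∀ x ∈ AddSubgroup.closure {x : G | μ x ≠ 0}, χ x = 1 := by
  have hre : ∑ x, μ x * (1 - (χ x).re) = 0 := by
    have := congrArg Complex.re h
    simp only [Complex.re_sum, Complex.re_ofReal_mul, Complex.one_re] at this
    simp only [mul_sub, mul_one, sum_sub_distrib, this, hμ1, sub_self]
  have hle : ∀ x, (χ x).re ≤ 1 := fun x =>
    (Complex.re_le_norm _).trans (AddChar.norm_apply χ x).le
  have h0 := (sum_eq_zero_iff_of_nonneg
    (fun x _ => mul_nonneg (hμ0 x) (sub_nonneg.2 (hle x)))).1 hre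
  intro x hx
  induction hx using AddSubgroup.closure_induction with
  | mem x hx =>
    have h1 := h0 x (mem_univ x)
    have h2 : (χ x).re = 1 := by
      rcases mul_eq_zero.1 h1 with h | h
      · exact absurd h hx
      · linarith
    have h3 : Complex.normSq (χ x) = 1 := by
      rw [Complex.normSq_eq_norm_sq, AddChar.norm_apply]; norm_num
    rw [Complex.normSq_apply, h2] at h3
    apply Complex.ext
    · simpa using h2
    · have : (χ x).im * (χ x).im = 0 := by linarith
      simpa using this
  | zero => simp
  | add x y _ _ hx hy => rw [AddChar.map_add_eq_mul, hx, hy, one_mul]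
  | neg x _ hx => rw [AddChar.map_neg_eq_conj, hx]; simp

open Classical in
theorem annihilator_aux (G : Type) [AddCommGroup G] [Fintype G] (H : Finset G)
    (hH : H.Nonempty)
    (K : Finset (AddChar G ℂ)) (hK : ∀ χ ∈ K, ∀ x ∈ H, χ x = 1) :
    (#K : ℝ) * #H ≤ Fintype.card G := by
  have hp := parseval_aux G (fun x => if x ∈ H then 1 else 0)
  have h1 : ∑ x : G, ‖(if x ∈ H then 1 else 0 : ℂ)‖ ^ 2 = (#H : ℝ) := by
    simp [apply_ite]
  rw [h1] at hp
  have h2 : (#K : ℝ) * (#H : ℝ) ^ 2 ≤ Fintype.card G * #H := by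
    rw [← hp]
    calc (#K : ℝ) * (#H : ℝ) ^ 2 = ∑ χ ∈ K, ‖∑ x, (if x ∈ H then 1 else 0 : ℂ) * χ x‖ ^ 2 := by
          rw [← nsmul_eq_mul, ← sum_const]
          refine sum_congr rfl fun χ hχ => ?_
          have : ∑ x, (if x ∈ H then 1 else 0 : ℂ) * χ x = #H := by
            simp only [ite_mul, one_mul, zero_mul, sum_ite_mem, univ_inter]
            rw [sum_congr rfl (hK χ hχ)]; simp
          rw [this]; simp
      _ ≤ _ := sum_le_sum_of_subset_of_nonneg (subset_univ _) (fun _ _ _ => by positivity)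
  have h3 : (0 : ℝ) < #H := by exact_mod_cast hH.card_pos
  nlinarith

open Classical in
theorem growth_aux
    (G : Type) [AddCommGroup G] [Fintype G]
    (R : ℝ) (hR : 0 < R)
    (μ : G → ℝ) (hμ0 : ∀ x, 0 ≤ μ x) (hμ1 : ∑ x : G, μ x = 1)
    (hchar : ∀ χ : AddChar G ℂ,
      ‖∑ x : G, (μ x : ℂ) * χ x‖ ≤ 1 / R ∨
        (∑ x : G, (μ x : ℂ) * χ x) = 1)
    (A H T : Finset G) (hA : A.Nonempty)
    (hH : ∀ x, x ∈ H ↔ x ∈ AddSubgroup.closure {x : G | μ x ≠ 0})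
    (hT : ∀ a ∈ A, ∀ s, μ s ≠ 0 → a + s ∈ T) :
    min (R ^ 2 * (#A : ℝ)) (#H : ℝ) < 2 * (#T : ℝ) := by
  set a : G → ℝ := fun x => if x ∈ A then 1 else 0 with ha
  set f : G → ℝ := fun x => ∑ y, a (x - y) * μ y with hf
  have hHne : H.Nonempty := ⟨0, (hH 0).2 (zero_mem _)⟩
  have hApos : (0 : ℝ) < #A := by exact_mod_cast hA.card_pos
  have hHpos : (0 : ℝ) < #H := by exact_mod_cast hHne.card_pos
  have hGpos : (0 : ℝ) < Fintype.card G := by exact_mod_cast Fintype.card_pos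
  have hasum : ∑ x, a x = #A := by simp [ha]
  have hshift : ∀ y, ∑ x, a (x - y) = #A := by
    intro y; rw [← hasum]; exact (Equiv.subRight y).sum_comp a
  have hfsum : ∑ x, f x = #A := by
    simp only [hf]
    rw [sum_comm]
    simp only [← sum_mul, hshift, ← mul_sum, hμ1, mul_one]
  have hfT : ∀ x, x ∉ T → f x = 0 := by
    intro x hx
    refine sum_eq_zero fun y _ => ?_
    by_contra hne
    have h1 : μ y ≠ 0 := right_ne_zero_of_mul hne
    have h2 : x - y ∈ A := by
      by_contra h; apply hne; simp [ha, h]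
    exact hx (by simpa using hT _ h2 y h1)
  have hCS : (#A : ℝ) ^ 2 ≤ #T * ∑ x, f x ^ 2 := by
    have h1 : ∑ x ∈ T, f x = #A := by
      rw [← hfsum]; exact sum_subset (subset_univ _) (fun x _ hx => hfT x hx)
    calc (#A : ℝ) ^ 2 = (∑ x ∈ T, f x) ^ 2 := by rw [h1]
      _ ≤ #T * ∑ x ∈ T, f x ^ 2 := sq_sum_le_card_mul_sum_sq
      _ ≤ _ := by
        refine mul_le_mul_of_nonneg_left ?_ (Nat.cast_nonneg _)
        exact sum_le_sum_of_subset_of_nonneg (subset_univ _) (fun x _ _ => sq_nonneg (f x))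
  set Fa : AddChar G ℂ → ℂ := fun χ => ∑ x, (a x : ℂ) * χ x with hFa
  set Fm : AddChar G ℂ → ℂ := fun χ => ∑ x, (μ x : ℂ) * χ x with hFm
  have hconv : ∀ χ : AddChar G ℂ, ∑ x, (f x : ℂ) * χ x = Fa χ * Fm χ := by
    intro χ
    have e1 : ∀ y, ∑ x, (a (x - y) : ℂ) * χ x = Fa χ * χ y := by
      intro y
      rw [hFa, sum_mul, ← (Equiv.subRight y).sum_comp (fun x => (a x : ℂ) * χ x * χ y)]
      refine sum_congr rfl fun x _ => ?_
      rw [mul_assoc, ← AddChar.map_add_eq_mul]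
      simp
    calc ∑ x, (f x : ℂ) * χ x = ∑ x, ∑ y, ((a (x - y) : ℂ) * χ x) * μ y := by
          refine sum_congr rfl fun x _ => ?_
          simp only [hf]
          push_cast
          rw [sum_mul]
          exact sum_congr rfl fun y _ => by ring
      _ = ∑ y, (Fa χ * χ y) * μ y := by
          rw [sum_comm]
          refine sum_congr rfl fun y _ => ?_
          rw [← sum_mul, e1]
      _ = _ := by
          rw [hFm, mul_sum]
          exact sum_congr rfl fun y _ => by ring
  have hPf : ∑ χ, ‖Fa χ‖ ^ 2 * ‖Fm χ‖ ^ 2 = (Fintype.card G : ℝ) * ∑ x, f x ^ 2 := by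
    have := parseval_aux G (fun x => (f x : ℂ))
    simp only [hconv, norm_mul, mul_pow, Complex.norm_real, Real.norm_eq_abs, sq_abs] at this
    exact this
  have hPa : ∑ χ, ‖Fa χ‖ ^ 2 = (Fintype.card G : ℝ) * #A := by
    have := parseval_aux G (fun x => (a x : ℂ))
    simp only [Complex.norm_real, Real.norm_eq_abs, sq_abs] at this
    rw [← hasum]
    convert this using 3 with x
    simp only [ha]; split_ifs <;> simp
  set K : Finset (AddChar G ℂ) := univ.filter (fun χ => Fm χ = 1) with hK
  have hKH : (#K : ℝ) * #H ≤ Fintype.card G := by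
    refine annihilator_aux G H hHne K ?_
    intro χ hχ x hx
    exact trivial_aux G μ hμ0 hμ1 χ (by simpa [hK] using hχ) x ((hH x).1 hx)
  have hFale : ∀ χ, ‖Fa χ‖ ≤ #A := by
    intro χ
    refine (norm_sum_le _ _).trans ?_
    rw [← hasum]
    refine sum_le_sum fun x _ => ?_
    rw [norm_mul, AddChar.norm_apply]
    simp only [ha]; split_ifs <;> simp
  have h1K : Fm 1 = 1 := by
    simp only [hFm, AddChar.one_apply, mul_one]
    exact_mod_cast hμ1
  have hFa1 : Fa 1 = #A := by
    simp only [hFa, AddChar.one_apply, mul_one]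
    exact_mod_cast hasum
  have hlt : ∑ χ, ‖Fa χ‖ ^ 2 * ‖Fm χ‖ ^ 2 <
      ∑ χ, (‖Fa χ‖ ^ 2 * (1 / R) ^ 2 + if χ ∈ K then (#A : ℝ) ^ 2 else 0) := by
    apply sum_lt_sum
    · intro χ _
      rcases hchar χ with h | h
      · have : ‖Fa χ‖ ^ 2 * ‖Fm χ‖ ^ 2 ≤ ‖Fa χ‖ ^ 2 * (1 / R) ^ 2 := by gcongr
        have : (0 : ℝ) ≤ if χ ∈ K then (#A : ℝ) ^ 2 else 0 := by split_ifs <;> positivity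
        linarith
      · have hk : χ ∈ K := by simpa [hK] using h
        have h' : Fm χ = 1 := h
        rw [if_pos hk, h']
        have : ‖Fa χ‖ ^ 2 ≤ (#A : ℝ) ^ 2 := by gcongr; exact hFale χ
        have : 0 ≤ ‖Fa χ‖ ^ 2 * (1 / R) ^ 2 := by positivity
        simp only [norm_one]; linarith
    · refine ⟨1, mem_univ _, ?_⟩
      have hk : (1 : AddChar G ℂ) ∈ K := by simpa [hK] using h1K
      rw [if_pos hk, h1K, hFa1]
      have : 0 < (#A : ℝ) ^ 2 * (1 / R) ^ 2 := by positivity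
      simp; simpa using this
  rw [sum_add_distrib, ← sum_mul, hPa, hPf] at hlt
  have hKs : ∑ χ, (if χ ∈ K then (#A : ℝ) ^ 2 else 0) = #K * (#A : ℝ) ^ 2 := by simp
  rw [hKs] at hlt
  by_contra hcon
  rw [not_lt, le_min_iff] at hcon
  obtain ⟨c1, c2⟩ := hcon
  set g : ℝ := (Fintype.card G : ℝ)
  set q := ∑ x, f x ^ 2
  set t : ℝ := (#T : ℝ)
  set α : ℝ := (#A : ℝ)
  set η : ℝ := (#H : ℝ)
  set k : ℝ := (#K : ℝ)
  have ht : 0 ≤ t := Nat.cast_nonneg _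
  have hk : 0 ≤ k := Nat.cast_nonneg _
  have ht' : 0 < t := by
    rcases ht.lt_or_eq with h | h
    · exact h
    · rw [← h] at hCS; nlinarith
  -- two terms, each at most half
  have s1 : t * (g * α * (1 / R) ^ 2) ≤ g * α ^ 2 / 2 := by
    have : t * (1 / R) ^ 2 ≤ α / 2 := by
      rw [div_pow, one_pow, mul_one_div, div_le_iff₀ (by positivity)]; linarith
    calc _ = g * α * (t * (1 / R) ^ 2) := by ring
      _ ≤ g * α * (α / 2) := by gcongr
      _ = _ := by ring
  have s2 : t * (k * α ^ 2) ≤ g * α ^ 2 / 2 := by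
    have : t * k ≤ g / 2 := by nlinarith
    calc _ = (t * k) * α ^ 2 := by ring
      _ ≤ (g / 2) * α ^ 2 := by gcongr
      _ = _ := by ring
  have s3 : g * α ^ 2 ≤ t * (g * q) := by
    calc _ ≤ g * (t * q) := by gcongr
      _ = _ := by ring
  have s4 := mul_lt_mul_of_pos_left hlt ht'
  linarith




/-- **A Fourier-analytic growth lemma.**
Let `μ` be a probability measure on a finite abelian group `G` such that every additive
character `χ` of `G` has `|μ̂(χ)| ≤ 1/R` or `μ̂(χ) = 1`, let `S` be the support of `μ`,
and `A ⊆ G` nonempty. Then `2|A + S| > min(R²|A|, |⟨S⟩|)`; in particular if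
`S ⊆ A ⊆ ⟨S⟩` and `2|A + A| ≤ R²|A|` then `A + A + A + A = ⟨S⟩`. -/
theorem fourier_growth_lemma
    (G : Type) [AddCommGroup G] [Fintype G]
    (R : ℝ) (hR : 0 < R)
    (μ : G → ℝ) (hμ0 : ∀ x, 0 ≤ μ x) (hμ1 : ∑ x : G, μ x = 1)
    (hchar : ∀ χ : G → ℂ, χ 0 = 1 → (∀ x y : G, χ (x + y) = χ x * χ y) →
      ‖∑ x : G, (μ x : ℂ) * χ x‖ ≤ 1 / R ∨
        (∑ x : G, (μ x : ℂ) * χ x) = 1)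
    (A : Set G) (hA : A.Nonempty) :
    (2 * ((A + {x : G | μ x ≠ 0}).ncard : ℝ) >
      min (R ^ 2 * (A.ncard : ℝ))
        (((AddSubgroup.closure {x : G | μ x ≠ 0} : AddSubgroup G) : Set G).ncard : ℝ)) ∧
    ({x : G | μ x ≠ 0} ⊆ A →
      A ⊆ ((AddSubgroup.closure {x : G | μ x ≠ 0} : AddSubgroup G) : Set G) →
      2 * ((A + A).ncard : ℝ) ≤ R ^ 2 * (A.ncard : ℝ) →
      A + A + A + A =
        ((AddSubgroup.closure {x : G | μ x ≠ 0} : AddSubgroup G) : Set G)) := by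
  classical
  set S : Set G := {x : G | μ x ≠ 0} with hS
  have main : min (R ^ 2 * (A.ncard : ℝ)) (((AddSubgroup.closure S : AddSubgroup G) : Set G).ncard : ℝ)
      < 2 * ((A + S).ncard : ℝ) := by
    have := growth_aux G R hR μ hμ0 hμ1
      (fun χ => hchar χ χ.map_zero_eq_one (fun x y => χ.map_add_eq_mul x y))
      A.toFinset ((AddSubgroup.closure S : AddSubgroup G) : Set G).toFinset (A + S).toFinset
      (by simpa using hA) (by intro x; simp [hS])
      (by
        intro a ha s hs
        rw [Set.mem_toFinset] at ha ⊢
        exact Set.add_mem_add ha hs)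
    simpa only [Set.ncard_eq_toFinset_card'] using this
  refine ⟨main, fun hSA hAH h2 => ?_⟩
  set H := AddSubgroup.closure S with hH
  have hle : ((A + S).ncard : ℝ) ≤ (A + A).ncard := by
    exact_mod_cast Set.ncard_le_ncard (Set.add_subset_add_left hSA) (Set.toFinite _)
  have hbig : ((H : Set G).ncard : ℝ) < 2 * ((A + A).ncard : ℝ) := by
    rcases min_lt_iff.1 main with h | h <;> linarith
  have hbig' : (H : Set G).ncard < 2 * (A + A).ncard := by exact_mod_cast hbig
  have hAAH : A + A ⊆ (H : Set G) := by
    rintro _ ⟨x, hx, y, hy, rfl⟩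
    exact H.add_mem (hAH hx) (hAH hy)
  have hassoc : A + A + A + A = (A + A) + (A + A) := by rw [add_assoc (A + A)]
  rw [hassoc]
  apply Set.Subset.antisymm
  · rintro _ ⟨x, hx, y, hy, rfl⟩
    exact H.add_mem (hAAH hx) (hAAH hy)
  · intro h hh
    set B : Set G := Set.image (fun x => h - x) (A + A) with hB
    have hBc : B.ncard = (A + A).ncard :=
      Set.ncard_image_of_injective _ (sub_right_injective)
    have hBH : B ⊆ (H : Set G) := by
      rintro _ ⟨x, hx, rfl⟩
      exact H.sub_mem hh (hAAH hx)
    have hnd : ¬ Disjoint (A + A) B := by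
      intro hd
      have h1 := Set.ncard_union_eq hd (Set.toFinite _) (Set.toFinite _)
      have h2 := Set.ncard_le_ncard (Set.union_subset hAAH hBH) (Set.toFinite _)
      omega
    obtain ⟨z, hz, y, hy, hyz⟩ := Set.not_disjoint_iff.1 hnd
    refine ⟨z, hz, y, hy, ?_⟩
    simp only at hyz ⊢
    rw [← hyz]; abel
end

section
/- Let U, V, Z be finite abelian groups, written additively, let T be a group acting on U and on V by automorphisms, and let β : U × V → Z be a bi-additive map (β(u+u', v) = β(u,v) + β(u',v) and β(u, v+v') = β(u,v) + β(u,v') for all u, u' ∈ U and v, v' ∈ V) which is T-invariant: β(t•u, t•v) = β(u,v) for all u ∈ U, v ∈ V, t ∈ T. Let R > 0 be a real number and assume that every T-invariant subgroup U' of U with U' ≠ U has index at least R in U (this holds in particular if every T-simple composition factor of U has order at least R). Let B = {β(u,v) : u ∈ U, v ∈ V} and let W = ⟨B⟩ be the subgroup of Z generated by B. Then for every nonempty subset A ⊆ Z one has 2·|A + B| > min(R²·|A|, |W|). In particular, if B ⊆ A ⊆ W and 2·|A + A| ≤ R²·|A|, then A + A + A + A = W. -/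
open scoped Pointwise

set_option synthInstance.maxHeartbeats 400000
set_option maxHeartbeats 1000000

theorem bgl_arith (R N a k w n S X1 X2 Y1 Y2 P : ℝ) (hR : 0 < R) (hN : 0 ≤ N) (ha : 0 < a)
    (hk : 0 < k) (hw : 0 < w) (hP : 0 < P) (hn : k * w = n)
    (hCS : (a * P) ^ 2 ≤ N * S) (hQ : a ^ 2 ≤ Y1) (h1 : X1 ≤ k * (a ^ 2 * P ^ 2))
    (h2 : R ^ 2 * X2 ≤ P ^ 2 * Y2) (e1 : X1 + X2 = n * S) (e2 : Y1 + Y2 = n * a) :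
    2 * N > min (R ^ 2 * a) w := by
  subst hn
  by_contra hcon
  rw [gt_iff_lt, not_lt, le_min_iff] at hcon
  obtain ⟨c1, c2⟩ := hcon
  have hR2 : 0 < R ^ 2 := by positivity
  have hP2 : 0 < P ^ 2 := by positivity
  have hNpos : 0 < N := by
    rcases hN.lt_or_eq with h | h
    · exact h
    · rw [← h] at hCS
      have : 0 < (a * P) ^ 2 := by positivity
      linarith
  have b1 : R ^ 2 * (k * w * S) ≤ P ^ 2 * (R ^ 2 * k * a ^ 2 + k * w * a - a ^ 2) := by
    have t1 : R ^ 2 * X1 ≤ R ^ 2 * (k * (a ^ 2 * P ^ 2)) := by gcongr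
    have t2 : P ^ 2 * Y2 ≤ P ^ 2 * (k * w * a - a ^ 2) := by gcongr; linarith
    rw [← e1]
    linarith
  have b2 : R ^ 2 * (k * w) * (a * P) ^ 2
      ≤ N * (P ^ 2 * (R ^ 2 * k * a ^ 2 + k * w * a - a ^ 2)) := by
    calc R ^ 2 * (k * w) * (a * P) ^ 2 ≤ R ^ 2 * (k * w) * (N * S) := by gcongr
      _ = N * (R ^ 2 * (k * w * S)) := by ring
      _ ≤ _ := by gcongr
  have b3 : N * (P ^ 2 * (R ^ 2 * k * a ^ 2 + k * w * a - a ^ 2))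
      < N * (P ^ 2 * (R ^ 2 * k * a ^ 2 + k * w * a)) := by
    gcongr
    have : 0 < a ^ 2 := by positivity
    linarith
  have b4 : (P ^ 2 * k * a) * (R ^ 2 * a * w) < (P ^ 2 * k * a) * (N * (R ^ 2 * a + w)) := by
    linarith
  have b5 := lt_of_mul_lt_mul_left b4 (by positivity)
  have d1 : 2 * N * w ≤ R ^ 2 * a * w := by gcongr
  have d2 : 2 * N * (R ^ 2 * a) ≤ w * (R ^ 2 * a) := by gcongr
  linarith

theorem bgl_parseval {Z : Type} [AddCommGroup Z] [Fintype Z] (f : Z → ℂ) :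
    ∑ χ : AddChar Z ℂ, ‖∑ z, f z * χ z‖ ^ 2 = (Fintype.card Z : ℝ) * ∑ z, ‖f z‖ ^ 2 := by
  classical
  have h : ((∑ χ : AddChar Z ℂ, ‖∑ z, f z * χ z‖ ^ 2 : ℝ) : ℂ)
      = (((Fintype.card Z : ℝ) * ∑ z, ‖f z‖ ^ 2 : ℝ) : ℂ) := by
    push_cast
    have h1 : ∀ χ : AddChar Z ℂ, ((‖∑ z, f z * χ z‖ : ℂ)) ^ 2
        = ∑ z, ∑ y, f z * (starRingEnd ℂ) (f y) * χ (z - y) := by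
      intro χ
      rw [← Complex.mul_conj', map_sum, Finset.sum_mul_sum]
      refine Finset.sum_congr rfl fun z _ => Finset.sum_congr rfl fun y _ => ?_
      rw [map_mul, ← AddChar.map_neg_eq_conj, sub_eq_add_neg, AddChar.map_add_eq_mul]
      ring
    simp_rw [h1]
    rw [Finset.sum_comm, Finset.mul_sum]
    refine Finset.sum_congr rfl fun z _ => ?_
    rw [Finset.sum_comm]
    simp_rw [← Finset.mul_sum, AddChar.sum_apply_eq_ite, sub_eq_zero]
    simp only [mul_ite, mul_zero, Finset.sum_ite_eq, Finset.mem_univ, if_true]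
    rw [← Complex.mul_conj']
    ring
  exact_mod_cast h

theorem bgl_perp {Z : Type} [AddCommGroup Z] [Fintype Z] (W : AddSubgroup Z) [DecidablePred (fun χ : AddChar Z ℂ => ∀ w ∈ W, χ w = 1)] :
    ((Finset.univ.filter (fun χ : AddChar Z ℂ => ∀ w ∈ W, χ w = 1)).card : ℝ)
      * ((W : Set Z).ncard : ℝ) = Fintype.card Z := by
  classical
  have hW : (W : Set Z).ncard = Fintype.card W := by
    rw [← Nat.card_coe_set_eq, Nat.card_eq_fintype_card]; rfl
  have e1 : ∑ w : W, ∑ χ : AddChar Z ℂ, χ (w : Z) = (Fintype.card Z : ℂ) := by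
    simp_rw [AddChar.sum_apply_eq_ite]
    rw [Finset.sum_eq_single (0 : W)] <;> simp
  have e2 : ∀ χ : AddChar Z ℂ, ∑ w : W, χ (w : Z)
      = if (∀ w ∈ W, χ w = 1) then (Fintype.card W : ℂ) else 0 := by
    intro χ
    have := AddChar.sum_eq_ite (χ.compAddMonoidHom W.subtype)
    simp only [AddChar.compAddMonoidHom_apply, AddSubgroup.subtype_apply] at this
    rw [this]
    congr 1
    rw [AddChar.ext_iff]
    simp
  rw [Finset.sum_comm] at e1
  simp_rw [e2] at e1
  rw [← Finset.sum_filter, Finset.sum_const, nsmul_eq_mul] at e1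
  rw [hW]
  exact_mod_cast e1

theorem bgl_M {U V Z : Type} [AddCommGroup U] [AddCommGroup V] [AddCommGroup Z]
    [Fintype U] [Fintype V] [Fintype Z]
    (T : Type) [Group T] [DistribMulAction T U] [DistribMulAction T V]
    (β : U → V → Z)
    (hβ1 : ∀ u u' v, β (u + u') v = β u v + β u' v)
    (hβ2 : ∀ u v v', β u (v + v') = β u v + β u v')
    (hβT : ∀ (t : T) (u : U) (v : V), β (t • u) (t • v) = β u v)
    (R : ℝ)
    (hind : ∀ U' : AddSubgroup U, (∀ (t : T), ∀ u ∈ U', t • u ∈ U') → U' ≠ ⊤ →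
      R ≤ (U'.index : ℝ)) (χ : AddChar Z ℂ)
    (hχ : ¬ ∀ w ∈ AddSubgroup.closure {z : Z | ∃ u v, z = β u v}, χ w = 1) :
    R * ‖∑ u, ∑ v, χ (β u v)‖ ≤ Fintype.card U * Fintype.card V := by
  classical
  have h01 : ∀ v, β 0 v = 0 := fun v => by simpa using hβ1 0 0 v
  have h02 : ∀ u, β u 0 = 0 := fun v => by simpa using hβ2 v 0 0
  have hneg : ∀ u v, β (-u) v = - β u v := fun u v => by
    have := hβ1 (-u) u v
    rw [neg_add_cancel, h01] at this
    exact (neg_eq_of_add_eq_zero_left this.symm).symm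
  let K : AddSubgroup U :=
    { carrier := {u | ∀ v, χ (β u v) = 1}
      zero_mem' := by intro v; simp [h01]
      add_mem' := by
        intro a b ha hb v
        rw [hβ1, AddChar.map_add_eq_mul, ha v, hb v, one_mul]
      neg_mem' := by
        intro a ha v
        rw [hneg, AddChar.map_neg_eq_inv, ha v, inv_one] }
  have hKm : ∀ u, u ∈ K ↔ ∀ v, χ (β u v) = 1 := fun u => Iff.rfl
  have hKT : ∀ (t : T), ∀ u ∈ K, t • u ∈ K := by
    intro t u hu v
    have := hβT t u (t⁻¹ • v)
    rw [smul_inv_smul] at this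
    rw [this]; exact hu _
  have hKtop : K ≠ ⊤ := by
    intro h
    apply hχ
    intro w hw
    induction hw using AddSubgroup.closure_induction with
    | mem x hx =>
      obtain ⟨u, v, rfl⟩ := hx
      have : u ∈ K := by rw [h]; trivial
      exact this v
    | zero => simp
    | add x y _ _ hx hy => rw [AddChar.map_add_eq_mul, hx, hy, one_mul]
    | neg x _ hx => rw [AddChar.map_neg_eq_inv, hx, inv_one]
  have hi := hind K hKT hKtop
  have hin : ∀ u, ∑ v, χ (β u v) = if u ∈ K then (Fintype.card V : ℂ) else 0 := by
    intro u
    let b : V →+ Z := ⟨⟨β u, h02 u⟩, hβ2 u⟩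
    have := AddChar.sum_eq_ite (χ.compAddMonoidHom b)
    have hb : ∀ v, b v = β u v := fun v => rfl
    simp only [AddChar.compAddMonoidHom_apply, hb] at this
    rw [this]
    congr 1
    rw [AddChar.ext_iff, hKm]
    simp [hb]
  simp_rw [hin]
  rw [← Finset.sum_filter, Finset.sum_const, nsmul_eq_mul, norm_mul, Complex.norm_natCast,
    Complex.norm_natCast]
  have hc : (Finset.univ.filter (fun u => u ∈ K)).card = Nat.card K := by
    rw [Nat.card_eq_fintype_card, Fintype.card_subtype]
  have hci := K.card_mul_index
  rw [Nat.card_eq_fintype_card (α := U)] at hci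
  rw [hc, ← hci]
  push_cast
  rw [← mul_assoc]
  apply mul_le_mul_of_nonneg_right _ (by positivity)
  rw [mul_comm]
  exact mul_le_mul_of_nonneg_left hi (by positivity)

theorem bgl_main (U V Z : Type) [AddCommGroup U] [AddCommGroup V] [AddCommGroup Z]
    [Fintype U] [Fintype V] [Fintype Z]
    (T : Type) [Group T] [DistribMulAction T U] [DistribMulAction T V]
    (β : U → V → Z)
    (hβ1 : ∀ u u' v, β (u + u') v = β u v + β u' v)
    (hβ2 : ∀ u v v', β u (v + v') = β u v + β u v')
    (hβT : ∀ (t : T) (u : U) (v : V), β (t • u) (t • v) = β u v)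
    (R : ℝ) (hR : 0 < R)
    (hind : ∀ U' : AddSubgroup U, (∀ (t : T), ∀ u ∈ U', t • u ∈ U') → U' ≠ ⊤ →
      R ≤ (U'.index : ℝ))
    (A : Set Z) (hA : A.Nonempty) :
    2 * ((A + {z : Z | ∃ u v, z = β u v}).ncard : ℝ) >
      min (R ^ 2 * (A.ncard : ℝ))
        (((AddSubgroup.closure {z : Z | ∃ u v, z = β u v} : AddSubgroup Z) :
            Set Z).ncard : ℝ) := by
  classical
  set B := {z : Z | ∃ u v, z = β u v} with hB
  set W := AddSubgroup.closure B with hW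
  have hk := bgl_perp W
  set Q := Finset.univ.filter (fun χ : AddChar Z ℂ => ∀ w ∈ W, χ w = 1) with hQ
  set A' := A.toFinset with hA'
  have hAc : A.ncard = A'.card := Set.ncard_eq_toFinset_card' A
  set N' := (A + B).toFinset with hN'
  have hNc : (A + B).ncard = N'.card := Set.ncard_eq_toFinset_card' _
  have ha1 : 0 < A'.card := by
    rw [Finset.card_pos]; simpa [hA'] using hA
  -- the representation function
  let r : Z → ℝ := fun z => ∑ a ∈ A', ∑ u, ∑ v, if a + β u v = z then 1 else 0
  have hr0 : ∀ z, z ∉ N' → r z = 0 := by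
    intro z hz
    refine Finset.sum_eq_zero fun a ha => Finset.sum_eq_zero fun u _ =>
      Finset.sum_eq_zero fun v _ => ?_
    rw [if_neg]
    rintro rfl
    apply hz
    rw [hN', Set.mem_toFinset]
    exact Set.add_mem_add (by simpa [hA'] using ha) ⟨u, v, rfl⟩
  have hrg : ∀ g : Z → ℂ, ∑ z, (r z : ℂ) * g z = ∑ a ∈ A', ∑ u, ∑ v, g (a + β u v) := by
    intro g
    have hc : ∀ z, (r z : ℂ) = ∑ a ∈ A', ∑ u, ∑ v, if a + β u v = z then (1 : ℂ) else 0 := by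
      intro z
      simp only [r]
      push_cast
      refine Finset.sum_congr rfl fun a _ => Finset.sum_congr rfl fun u _ =>
        Finset.sum_congr rfl fun v _ => ?_
      split_ifs <;> simp
    simp_rw [hc, Finset.sum_mul]
    rw [Finset.sum_comm]
    refine Finset.sum_congr rfl fun a _ => ?_
    rw [Finset.sum_comm]
    refine Finset.sum_congr rfl fun u _ => ?_
    rw [Finset.sum_comm]
    refine Finset.sum_congr rfl fun v _ => ?_
    simp
  have hrs : ∑ z, r z = A'.card * (Fintype.card U * Fintype.card V) := by
    have := hrg (fun _ => 1)
    simp only [mul_one, Finset.sum_const, nsmul_eq_mul, Finset.card_univ] at this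
    exact_mod_cast this
  have hrs' : ∑ z ∈ N', r z = A'.card * (Fintype.card U * Fintype.card V) := by
    rw [← hrs]
    exact Finset.sum_subset (Finset.subset_univ _) fun z _ hz => hr0 z hz
  have hCS : (A'.card * (Fintype.card U * Fintype.card V) : ℝ) ^ 2 ≤ N'.card * ∑ z, r z ^ 2 := by
    rw [← hrs']
    refine sq_sum_le_card_mul_sum_sq.trans ?_
    refine mul_le_mul_of_nonneg_left ?_ (by positivity)
    exact Finset.sum_le_sum_of_subset_of_nonneg (Finset.subset_univ _) fun _ _ _ => sq_nonneg _
  let F : AddChar Z ℂ → ℂ := fun χ => ∑ a ∈ A', χ a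
  let M : AddChar Z ℂ → ℂ := fun χ => ∑ u, ∑ v, χ (β u v)
  have hrP : ∑ χ, ‖F χ‖ ^ 2 * ‖M χ‖ ^ 2 = Fintype.card Z * ∑ z, r z ^ 2 := by
    have := bgl_parseval (fun z => (r z : ℂ))
    simp only [Complex.norm_real, Real.norm_eq_abs, sq_abs] at this
    rw [← this]
    refine Finset.sum_congr rfl fun χ _ => ?_
    rw [hrg, ← mul_pow, ← norm_mul]
    congr 2
    simp only [F, M]
    rw [Finset.sum_mul]
    simp only [Finset.mul_sum, AddChar.map_add_eq_mul]
  have hFP : ∑ χ, ‖F χ‖ ^ 2 = Fintype.card Z * A'.card := by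
    have := bgl_parseval (fun z => if z ∈ A' then (1 : ℂ) else 0)
    simp only [ite_mul, one_mul, zero_mul] at this
    rw [Finset.sum_congr rfl (g := fun χ => ‖F χ‖ ^ 2)] at this
    · rw [this]; congr 1
      simp [apply_ite]
    · intro χ _
      simp [F]
  set P : ℝ := Fintype.card U * Fintype.card V with hP
  have hPpos : 0 < P := by
    have := Fintype.card_pos (α := U); have := Fintype.card_pos (α := V); positivity
  have hFle : ∀ χ, ‖F χ‖ ≤ A'.card := by
    intro χ
    refine (norm_sum_le _ _).trans ?_
    simp
  have hMle : ∀ χ, ‖M χ‖ ≤ P := by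
    intro χ
    refine (norm_sum_le _ _).trans ?_
    refine (Finset.sum_le_sum fun u _ => norm_sum_le _ _).trans ?_
    simp [hP]
  have h1Q : (1 : AddChar Z ℂ) ∈ Q := by simp [hQ]
  have hF1 : ‖F 1‖ = A'.card := by simp [F]
  have hQge : (A'.card : ℝ) ^ 2 ≤ ∑ χ ∈ Q, ‖F χ‖ ^ 2 := by
    rw [← hF1]
    exact Finset.single_le_sum (f := fun χ => ‖F χ‖ ^ 2) (fun _ _ => sq_nonneg _) h1Q
  have hs1 : ∑ χ ∈ Q, ‖F χ‖ ^ 2 * ‖M χ‖ ^ 2 ≤ Q.card * ((A'.card : ℝ) ^ 2 * P ^ 2) := by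
    rw [← nsmul_eq_mul]
    refine Finset.sum_le_card_nsmul _ _ _ fun χ _ => ?_
    have := hFle χ; have := hMle χ
    gcongr
  have hs2 : R ^ 2 * ∑ χ ∈ Qᶜ, ‖F χ‖ ^ 2 * ‖M χ‖ ^ 2 ≤ P ^ 2 * ∑ χ ∈ Qᶜ, ‖F χ‖ ^ 2 := by
    rw [Finset.mul_sum, Finset.mul_sum]
    refine Finset.sum_le_sum fun χ hχ => ?_
    have hb := bgl_M T β hβ1 hβ2 hβT R hind χ (by simpa [hQ] using hχ)
    have hb2 : (R * ‖M χ‖) ^ 2 ≤ P ^ 2 := by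
      gcongr
    nlinarith [sq_nonneg ‖F χ‖]
  have hsplit1 := Finset.sum_add_sum_compl Q (fun χ => ‖F χ‖ ^ 2 * ‖M χ‖ ^ 2)
  have hsplit2 := Finset.sum_add_sum_compl Q (fun χ => ‖F χ‖ ^ 2)
  rw [hrP] at hsplit1
  rw [hFP] at hsplit2
  rw [hAc, hNc]
  have hwpos : (0 : ℝ) < (W : Set Z).ncard := by
    have : 0 < (W : Set Z).ncard := by
      rw [Set.ncard_pos]; exact ⟨0, W.zero_mem⟩
    exact_mod_cast this
  have hkpos : (0 : ℝ) < Q.card := by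
    have := Finset.card_pos.2 ⟨_, h1Q⟩
    exact_mod_cast this
  have hapos : (0 : ℝ) < A'.card := by exact_mod_cast ha1
  have hN0 : (0 : ℝ) ≤ N'.card := by positivity
  generalize (N'.card : ℝ) = N at *
  generalize (A'.card : ℝ) = a at *
  generalize (Q.card : ℝ) = k at *
  generalize ((W : Set Z).ncard : ℝ) = w at *
  generalize (Fintype.card Z : ℝ) = n at *
  generalize ∑ z, r z ^ 2 = S at *
  generalize ∑ χ ∈ Qᶜ, ‖F χ‖ ^ 2 * ‖M χ‖ ^ 2 = X2 at *
  generalize ∑ χ ∈ Q, ‖F χ‖ ^ 2 * ‖M χ‖ ^ 2 = X1 at *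
  generalize ∑ χ ∈ Qᶜ, ‖F χ‖ ^ 2 = Y2 at *
  generalize ∑ χ ∈ Q, ‖F χ‖ ^ 2 = Y1 at *
  exact bgl_arith R N a k w n S X1 X2 Y1 Y2 P hR hN0 hapos hkpos hwpos hPpos hk hCS hQge hs1 hs2
    hsplit1 hsplit2

/-- **Growth lemma for images of a bilinear map.**
Let `U, V, Z` be finite abelian groups, `T` a group acting on `U` and `V`, and
`β : U × V → Z` a `T`-invariant bi-additive map. If every proper `T`-invariant subgroup
of `U` has index at least `R`, and `B = β(U,V)`, `W = ⟨B⟩`, then for every nonempty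
`A ⊆ Z` we have `2|A + B| > min(R²|A|, |W|)`; in particular if `B ⊆ A ⊆ W` and
`2|A + A| ≤ R²|A|` then `A + A + A + A = W`. -/
theorem bilinear_growth_lemma
    (U V Z : Type) [AddCommGroup U] [AddCommGroup V] [AddCommGroup Z]
    [Fintype U] [Fintype V] [Fintype Z]
    (T : Type) [Group T] [DistribMulAction T U] [DistribMulAction T V]
    (β : U → V → Z)
    (hβ1 : ∀ u u' v, β (u + u') v = β u v + β u' v)
    (hβ2 : ∀ u v v', β u (v + v') = β u v + β u v')
    (hβT : ∀ (t : T) (u : U) (v : V), β (t • u) (t • v) = β u v)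
    (R : ℝ) (hR : 0 < R)
    (hind : ∀ U' : AddSubgroup U, (∀ (t : T), ∀ u ∈ U', t • u ∈ U') → U' ≠ ⊤ →
      R ≤ (U'.index : ℝ))
    (A : Set Z) (hA : A.Nonempty) :
    (2 * ((A + {z : Z | ∃ u v, z = β u v}).ncard : ℝ) >
      min (R ^ 2 * (A.ncard : ℝ))
        (((AddSubgroup.closure {z : Z | ∃ u v, z = β u v} : AddSubgroup Z) :
            Set Z).ncard : ℝ)) ∧
    ({z : Z | ∃ u v, z = β u v} ⊆ A →
      A ⊆ ((AddSubgroup.closure {z : Z | ∃ u v, z = β u v} : AddSubgroup Z) : Set Z) →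
      2 * ((A + A).ncard : ℝ) ≤ R ^ 2 * (A.ncard : ℝ) →
      A + A + A + A =
        ((AddSubgroup.closure {z : Z | ∃ u v, z = β u v} : AddSubgroup Z) : Set Z)) := by
  have hmain := bgl_main U V Z T β hβ1 hβ2 hβT R hR hind A hA
  refine ⟨hmain, ?_⟩
  intro hBA hAW h2
  set B := {z : Z | ∃ u v, z = β u v} with hB
  set W := AddSubgroup.closure B with hW
  have hAA : A + A ⊆ (W : Set Z) := by
    rintro _ ⟨x, hx, y, hy, rfl⟩
    exact W.add_mem (hAW hx) (hAW hy)
  have hle : ((A + B).ncard : ℝ) ≤ (A + A).ncard := by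
    exact_mod_cast Set.ncard_le_ncard (Set.add_subset_add_left hBA) (Set.toFinite _)
  have hbig : ((W : Set Z).ncard : ℝ) < 2 * ((A + A).ncard : ℝ) := by
    rcases min_lt_iff.1 (lt_of_lt_of_le hmain
      (mul_le_mul_of_nonneg_left hle (by norm_num))) with h | h
    · linarith
    · exact h
  have hbig' : (W : Set Z).ncard < 2 * (A + A).ncard := by exact_mod_cast hbig
  apply Set.Subset.antisymm
  · rw [add_assoc (A + A)]
    rintro _ ⟨x, hx, y, hy, rfl⟩
    exact W.add_mem (hAA hx) (hAA hy)
  · intro w hw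
    rw [add_assoc (A + A)]
    set C := (fun x => w - x) '' (A + A) with hC
    have hCc : C.ncard = (A + A).ncard :=
      Set.ncard_image_of_injective _ (sub_right_injective)
    have hCW : C ⊆ (W : Set Z) := by
      rintro _ ⟨x, hx, rfl⟩
      exact W.sub_mem hw (hAA hx)
    have hnd : ¬ Disjoint (A + A) C := by
      intro hd
      have h3 := Set.ncard_union_eq hd (Set.toFinite _) (Set.toFinite _)
      have h4 := Set.ncard_le_ncard (Set.union_subset hAA hCW) (Set.toFinite _)
      omega
    obtain ⟨x, hx, y, hy, hxy⟩ := Set.not_disjoint_iff.1 hnd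
    refine ⟨x, hx, y, hy, ?_⟩
    simp only at hxy ⊢
    rw [← hxy]; abel
end

section
/- Let G be a group and let N ⊴ H ≤ G be subgroups with N normal in H. For a subset B ⊆ G let tr(B) denote the image of B ∩ H under the quotient map H → H/N. Let A ⊆ G be a finite nonempty symmetric subset and K ≥ 1 a real number with |A^3| ≤ K·|A|. Then for every natural number k ≥ 2: |tr(A^k)|·|A| ≤ |A^{k+5}|·|tr(A^2)|, and consequently |tr(A^k)| ≤ K^{k+3}·|tr(A^2)|. -/
open scoped Pointwise

set_option synthInstance.maxHeartbeats 400000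
set_option maxHeartbeats 1000000

/-- The trace of a set `B ⊆ G` in the section `H/N`: the image of `B ∩ H` under the
quotient map `H → H/N`. -/
def sectionTrace {G : Type*} [Group G] (H N : Subgroup G) (B : Set G) :
    Set (↥H ⧸ N.subgroupOf H) :=
  QuotientGroup.mk '' (Subtype.val ⁻¹' B)

/-- **Growth in sections.** If `N ⊴ H ≤ G` and `A` is a finite nonempty symmetric
`K`-tripling subset of `G`, then for `k ≥ 2`,
`|tr(A^k)|·|A| ≤ |A^{k+5}|·|tr(A²)|`, so `|tr(A^k)| ≤ K^{k+3}·|tr(A²)|`. -/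
theorem growth_in_sections
    (G : Type) [Group G] (H N : Subgroup G) (hNH : N ≤ H)
    (hnorm : ∀ h ∈ H, ∀ x ∈ N, h * x * h⁻¹ ∈ N)
    (A : Set G) (hfin : A.Finite) (hne : A.Nonempty) (hsym : A⁻¹ = A)
    (K : ℝ) (hK : 1 ≤ K)
    (htrip : ((A ^ 3).ncard : ℝ) ≤ K * (A.ncard : ℝ))
    (k : ℕ) (hk : 2 ≤ k) :
    (sectionTrace H N (A ^ k)).ncard * A.ncard ≤
        (A ^ (k + 5)).ncard * (sectionTrace H N (A ^ 2)).ncard ∧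
      ((sectionTrace H N (A ^ k)).ncard : ℝ) ≤
        K ^ (k + 3) * ((sectionTrace H N (A ^ 2)).ncard : ℝ) := by
  classical
  obtain ⟨B, rfl⟩ : ∃ B : Finset G, (B : Set G) = A := ⟨hfin.toFinset, by simp⟩
  have hB : B.Nonempty := by simpa using hne
  have hBsym : B⁻¹ = B := by
    apply Finset.coe_injective
    simpa using hsym
  have hc : ∀ n : ℕ, ((B : Set G) ^ n).ncard = (B ^ n).card := by
    intro n
    rw [← Finset.coe_pow, Set.ncard_coe_finset]
  have hfinTr : ∀ n : ℕ, (sectionTrace H N ((B : Set G) ^ n)).Finite := by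
    intro n
    unfold sectionTrace
    apply Set.Finite.image
    apply Set.Finite.preimage Subtype.val_injective.injOn
    rw [← Finset.coe_pow]
    exact Finset.finite_toSet _
  rw [hc 3, Set.ncard_coe_finset] at htrip
  rw [hc (k + 5), Set.ncard_coe_finset]
  obtain ⟨T, hT⟩ : ∃ T : Finset (↥H ⧸ N.subgroupOf H), (T : Set _) = sectionTrace H N ((B : Set G) ^ k) :=
    ⟨(hfinTr k).toFinset, by simp⟩
  obtain ⟨S, hS⟩ : ∃ S : Finset (↥H ⧸ N.subgroupOf H), (S : Set _) = sectionTrace H N ((B : Set G) ^ 2) :=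
    ⟨(hfinTr 2).toFinset, by simp⟩
  have hrep : ∀ q : ↥H ⧸ N.subgroupOf H, ∃ h : ↥H, (h : ↥H ⧸ N.subgroupOf H) = q ∧
      (q ∈ T → (h : G) ∈ B ^ k) := by
    intro q
    by_cases hq : q ∈ T
    · have hq' : q ∈ sectionTrace H N ((B : Set G) ^ k) := by rw [← hT]; exact hq
      obtain ⟨h, hh, rfl⟩ := hq'
      refine ⟨h, rfl, fun _ => ?_⟩
      rw [← Finset.mem_coe, Finset.coe_pow]
      exact hh
    · obtain ⟨h, rfl⟩ := QuotientGroup.mk_surjective q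
      exact ⟨h, rfl, fun h' => absurd h' hq⟩
  choose r hr1 hr2 using hrep
  have key : (T ×ˢ B).card ≤ S.card * (B ^ (k + 1)).card := by
    apply Finset.card_le_mul_card_image_of_maps_to (f := fun p => (r p.1 : G) * p.2)
    · rintro ⟨t, a⟩ hp
      rw [Finset.mem_product] at hp
      rw [pow_succ]
      exact Finset.mul_mem_mul (hr2 _ hp.1) hp.2
    · intro x _
      rcases (Finset.filter (fun p => (r p.1 : G) * p.2 = x) (T ×ˢ B)).eq_empty_or_nonempty with he | ⟨⟨s, b⟩, hsb⟩
      · rw [he]; simp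
      · rw [Finset.mem_filter, Finset.mem_product] at hsb
        obtain ⟨⟨_, hb⟩, hx⟩ := hsb
        apply Finset.card_le_card_of_injOn
          (fun p => (((r s)⁻¹ * r p.1 : ↥H) : ↥H ⧸ N.subgroupOf H))
        · rintro ⟨t, a⟩ hp
          rw [Finset.mem_coe, Finset.mem_filter, Finset.mem_product] at hp
          obtain ⟨⟨_, ha⟩, hx'⟩ := hp
          rw [hS]
          refine ⟨(r s)⁻¹ * r t, ?_, rfl⟩
          have e : (((r s)⁻¹ * r t : ↥H) : G) = b * a⁻¹ := by
            simp only at hx hx'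
            rw [← hx] at hx'
            rw [Subgroup.coe_mul, Subgroup.coe_inv, eq_mul_inv_iff_mul_eq, mul_assoc, hx']
            group
          show (((r s)⁻¹ * r t : ↥H) : G) ∈ (B : Set G) ^ 2
          rw [e, sq]
          refine Set.mul_mem_mul hb ?_
          rw [← hsym]
          simpa using ha
        · rintro ⟨t, a⟩ hp ⟨t', a'⟩ hp' heq
          rw [Finset.mem_coe, Finset.mem_filter] at hp hp'
          have htt : t = t' := by
            rw [← hr1 t, ← hr1 t']
            simp only at heq
            rw [QuotientGroup.eq] at heq ⊢
            simpa [mul_assoc] using heq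
          subst htt
          have := hp.2.trans hp'.2.symm
          simp only [mul_right_inj] at this
          rw [this]
  rw [← hT, ← hS, Set.ncard_coe_finset, Set.ncard_coe_finset]
  rw [Finset.card_product] at key
  have hmono : (B ^ (k + 1)).card ≤ (B ^ (k + 5)).card :=
    hB.card_pow_mono (by omega)
  have h1 : T.card * B.card ≤ (B ^ (k + 5)).card * S.card := by
    calc _ ≤ S.card * (B ^ (k + 1)).card := key
      _ ≤ S.card * (B ^ (k + 5)).card := Nat.mul_le_mul_left _ hmono
      _ = _ := mul_comm _ _
  refine ⟨h1, ?_⟩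
  have h2 := Finset.small_pow_of_small_tripling (m := k + 5) (by omega) htrip hBsym
  have e : k + 5 - 2 = k + 3 := by omega
  rw [e] at h2
  have hpos : (0 : ℝ) < B.card := by exact_mod_cast hB.card_pos
  refine le_of_mul_le_mul_right ?_ hpos
  calc (T.card : ℝ) * B.card ≤ (B ^ (k + 5)).card * S.card := by exact_mod_cast h1
    _ ≤ (K ^ (k + 3) * B.card) * S.card := by gcongr
    _ = _ := by ring
end

section
/- Let n ≥ 1 be a natural number and let G = ℤⁿ ⋊ S_n be the semidirect product of ℤⁿ by the symmetric group S_n acting by permuting the coordinates. Let r > n! be an integer and let A = {(v, σ) ∈ G : |v_i| ≤ r for all i} (that is, A = [-r,r]ⁿ·S_n). Then for every nilpotent subgroup Γ ≤ G and every natural number m, if A is covered by m left cosets of Γ, then m ≥ n!. -/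
open scoped Pointwise

set_option synthInstance.maxHeartbeats 400000
set_option maxHeartbeats 1000000

/-- The permutation action of `S_n` on `ℤⁿ` by permuting coordinates, as additive
automorphisms: `σ • v = v ∘ σ⁻¹`. -/
def permAddEquiv {n : ℕ} (σ : Equiv.Perm (Fin n)) : (Fin n → ℤ) ≃+ (Fin n → ℤ) :=
  { Equiv.arrowCongr σ (Equiv.refl ℤ) with map_add' := fun _ _ => rfl }

/-- The action of `S_n` on `ℤⁿ` (written multiplicatively) by permuting coordinates,
as a homomorphism to the automorphism group, used to form `ℤⁿ ⋊ S_n`. -/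
def permHom (n : ℕ) : Equiv.Perm (Fin n) →* MulAut (Multiplicative (Fin n → ℤ)) where
  toFun σ := AddEquiv.toMultiplicative (permAddEquiv σ)
  map_one' := by ext x; rfl
  map_mul' σ τ := by ext x; rfl

namespace NilCover

def D {n : ℕ} (σ : Equiv.Perm (Fin n)) (x : Fin n → ℤ) : Fin n → ℤ :=
  fun i => x i - x (σ⁻¹ i)

lemma D_two {n : ℕ} (σ : Equiv.Perm (Fin n)) (x : Fin n → ℤ) (h : D σ (D σ x) = 0) :
    D σ x = 0 := by
  have hy : ∀ i, D σ x (σ⁻¹ i) = D σ x i := by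
    intro i
    have := congrFun h i
    have h2 : D σ (D σ x) i = D σ x i - D σ x (σ⁻¹ i) := rfl
    rw [h2] at this
    simp only [Pi.zero_apply] at this
    linarith
  have hk : ∀ k : ℕ, ∀ i, x ((σ⁻¹ ^ k) i) = x i - k * D σ x i := by
    intro k
    induction k with
    | zero => intro i; simp
    | succ k ih =>
      intro i
      rw [pow_succ, Equiv.Perm.mul_apply, ih, hy]
      have : D σ x i = x i - x (σ⁻¹ i) := rfl
      push_cast
      linarith
  funext i
  have h1 := hk (orderOf σ⁻¹) i
  rw [pow_orderOf_eq_one, Equiv.Perm.one_apply] at h1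
  have hpos : (0 : ℤ) < orderOf σ⁻¹ := by exact_mod_cast orderOf_pos σ⁻¹
  have h3 : (orderOf σ⁻¹ : ℤ) * D σ x i = 0 := by linarith
  rcases mul_eq_zero.1 h3 with h4 | h4
  · omega
  · exact h4

lemma D_iter {n : ℕ} (σ : Equiv.Perm (Fin n)) (x : Fin n → ℤ) (c : ℕ)
    (h : (D σ)^[c + 1] x = 0) : D σ x = 0 := by
  induction c with
  | zero => exact h
  | succ c ih =>
    apply ih
    rw [Function.iterate_succ_apply', Function.iterate_succ_apply'] at h
    rw [Function.iterate_succ_apply']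
    exact D_two σ _ h

abbrev GG (n : ℕ) := Multiplicative (Fin n → ℤ) ⋊[permHom n] Equiv.Perm (Fin n)

lemma comm_eq {n : ℕ} (γ : GG n) (w : Fin n → ℤ) :
    (SemidirectProduct.inl (Multiplicative.ofAdd w) : GG n) * γ *
      (SemidirectProduct.inl (Multiplicative.ofAdd w))⁻¹ * γ⁻¹ =
      SemidirectProduct.inl (Multiplicative.ofAdd (D γ.right w)) := by
  have h : γ * (SemidirectProduct.inl (Multiplicative.ofAdd w))⁻¹ * γ⁻¹ =
      SemidirectProduct.inl (permHom n γ.right (Multiplicative.ofAdd w)⁻¹) := by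
    ext1
    · simp [mul_comm]
    · simp
  rw [mul_assoc, mul_assoc, ← mul_assoc γ, h, ← map_mul]
  congr 1

lemma right_one {n : ℕ} (Γ : Subgroup (GG n)) (hnil : Group.IsNilpotent ↥Γ)
    (hk : ∀ i : Fin n, ∃ k : ℤ, k ≠ 0 ∧
      (SemidirectProduct.inl (Multiplicative.ofAdd (Pi.single i k)) : GG n) ∈ Γ)
    (γ : GG n) (hγ : γ ∈ Γ) : γ.right = 1 := by
  by_contra hne
  obtain ⟨i, hi⟩ : ∃ i, γ.right i ≠ i := by
    by_contra hh
    push Not at hh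
    exact hne (Equiv.ext hh)
  obtain ⟨k, hk0, hkm⟩ := hk i
  have key : ∀ j : ℕ, (SemidirectProduct.inl
      (Multiplicative.ofAdd ((D γ.right)^[j] (Pi.single i k))) : GG n) ∈
      Γ.lowerCentralSeries j := by
    intro j
    induction j with
    | zero => exact hkm
    | succ j ih =>
      have e := comm_eq γ ((D γ.right)^[j] (Pi.single i k))
      rw [← Function.iterate_succ_apply' (D γ.right)] at e
      have := Subgroup.commutator_mem_commutator ih hγ
      rw [commutatorElement_def, e] at this
      exact this
  obtain ⟨c, hc⟩ := (Subgroup.isNilpotent_iff_lowerCentralSeries Γ).1 hnil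
  have h' := key c
  rw [hc, Subgroup.mem_bot] at h'
  have h1 : (D γ.right)^[c] (Pi.single i k) = 0 :=
    congrArg (fun z : GG n => Multiplicative.toAdd z.left) h'
  have h2 : (D γ.right)^[c + 1] (Pi.single i k) = 0 := by
    rw [Function.iterate_succ_apply', h1]; funext t; simp [D]
  have h3 := congrFun (D_iter _ _ _ h2) i
  have hi' : γ.right⁻¹ i ≠ i := by
    intro h; apply hi; nth_rewrite 1 [← h]; simp
  simp only [D, Pi.single_eq_same, Pi.single_eq_of_ne hi', sub_zero, Pi.zero_apply] at h3
  exact hk0 h3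

end NilCover

/-- In `G = ℤⁿ ⋊ S_n`, the `2ⁿ`-approximate group `A = [-r,r]ⁿ·S_n` (with `r > n!`)
cannot be covered by fewer than `n!` cosets of any nilpotent subgroup. -/
theorem no_small_nilpotent_coset_cover
    (n : ℕ) (hn : 1 ≤ n) (r : ℤ) (hr : (Nat.factorial n : ℤ) < r)
    (Γ : Subgroup (Multiplicative (Fin n → ℤ) ⋊[permHom n] Equiv.Perm (Fin n)))
    (hnil : Group.IsNilpotent ↥Γ)
    (m : ℕ)
    (S : Finset (Multiplicative (Fin n → ℤ) ⋊[permHom n] Equiv.Perm (Fin n)))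
    (hcard : S.card = m)
    (hcover :
      {g : Multiplicative (Fin n → ℤ) ⋊[permHom n] Equiv.Perm (Fin n) |
          ∀ i : Fin n, |Multiplicative.toAdd g.left i| ≤ r} ⊆
        ⋃ g ∈ S, g • (Γ : Set (Multiplicative (Fin n → ℤ) ⋊[permHom n]
          Equiv.Perm (Fin n)))) :
    Nat.factorial n ≤ m := by
  by_contra hlt
  push Not at hlt
  have hk : ∀ i : Fin n, ∃ k : ℤ, k ≠ 0 ∧
      (SemidirectProduct.inl (Multiplicative.ofAdd (Pi.single i k)) : NilCover.GG n) ∈ Γ := by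
    intro i
    let f : ℕ → NilCover.GG n := fun t =>
      SemidirectProduct.inl (Multiplicative.ofAdd (Pi.single i (t : ℤ)))
    have hf : ∀ t ∈ Finset.range (Nat.factorial n), ∃ g ∈ S, g⁻¹ * f t ∈ Γ := by
      intro t ht
      have htm : f t ∈ {g : NilCover.GG n | ∀ i : Fin n, |Multiplicative.toAdd g.left i| ≤ r} := by
        intro j
        have ht' : t < Nat.factorial n := Finset.mem_range.1 ht
        have ht2 : (t : ℤ) < Nat.factorial n := by exact_mod_cast ht'
        simp only [f, SemidirectProduct.left_inl, toAdd_ofAdd, Pi.single_apply]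
        split_ifs
        · rw [abs_of_nonneg (by positivity)]; linarith
        · simp only [abs_zero]; linarith [Int.natCast_nonneg t]
      have := hcover htm
      simp only [Set.mem_iUnion] at this
      obtain ⟨g, hg, hm⟩ := this
      exact ⟨g, hg, by simpa [Set.mem_smul_set_iff_inv_smul_mem] using hm⟩
    choose! c hcS hcΓ using hf
    obtain ⟨a, ha, b, hb, hab, he⟩ := Finset.exists_ne_map_eq_of_card_lt_of_maps_to
      (s := Finset.range (Nat.factorial n)) (t := S) (f := c)
      (by rw [Finset.card_range, hcard]; exact hlt) hcS
    refine ⟨(b : ℤ) - a, by omega, ?_⟩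
    have h1 := Γ.mul_mem (Γ.inv_mem (hcΓ a ha)) (hcΓ b hb)
    rw [he] at h1
    have h2 : ((c b)⁻¹ * f a)⁻¹ * ((c b)⁻¹ * f b) = (f a)⁻¹ * f b := by group
    rw [h2] at h1
    convert h1 using 1
    simp only [f]
    rw [← map_inv, ← map_mul, ← ofAdd_neg, ← ofAdd_add, Pi.single_sub]
    congr 2
    abel
  have hr1 := NilCover.right_one Γ hnil hk
  have hsurj : (Finset.univ : Finset (Equiv.Perm (Fin n))) ⊆ S.image (fun g => g.right) := by
    intro σ _
    have hm : (SemidirectProduct.inr σ : NilCover.GG n) ∈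
        {g : NilCover.GG n | ∀ i : Fin n, |Multiplicative.toAdd g.left i| ≤ r} := by
      intro j
      simp only [SemidirectProduct.left_inr, toAdd_one, Pi.zero_apply, abs_zero]
      linarith [Int.natCast_nonneg (Nat.factorial n)]
    have := hcover hm
    simp only [Set.mem_iUnion] at this
    obtain ⟨g, hg, hm⟩ := this
    rw [Set.mem_smul_set_iff_inv_smul_mem] at hm
    have h := hr1 _ hm
    simp only [smul_eq_mul, SemidirectProduct.mul_right, SemidirectProduct.inv_right,
      SemidirectProduct.right_inr] at h
    exact Finset.mem_image.2 ⟨g, hg, (inv_mul_eq_one.1 h)⟩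
  have h1 := (Finset.card_le_card hsurj).trans Finset.card_image_le
  rw [Finset.card_univ, Fintype.card_perm, Fintype.card_fin, hcard] at h1
  omega
end
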